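/- Let 0 < δ ≤ 1, C ≥ 1, 0 < b₀ ≤ 1 and 0 < ε < δ/100. Let F ⊂ B(0,1) ⊂ ℝⁿ be a finite set and let μ be the uniform (normalized counting) probability measure on F; assume μ(B(Z,b)) ≤ C·b^δ for all Z ∈ F and all b ≥ b₀. Let B = {s ∈ ℝ^{n−2} : b₀^{ε/8} ≤ ∥s∥ ≤ 1} and μ_s = f_sμ. Then there exists a measurable subset B' ⊆ B with |B \ B'| ≤ b₀^{ε} such that for every s ∈ B' there exists a subset F_s ⊆ F with μ(F \ F_s) ≤ b₀^{ε}, so that for every Z ∈ F_s and every b ≥ b₀ one has μ_s(B(f_s(Z), b)) ≤ C''·b₀^{−3ε}·b^δ, where B(f_s(Z),b) ⊂ ℝ³ is the Euclidean ball and C'' depends only on C, L, q, n and ε. -/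

import Mathlib

/-!
The proof is a first-moment argument. For `W = Z' - Z`, the set of `s` with `b₀^{ε/8} ≤ ‖s‖ ≤ 1` and
`‖f_s(W)‖ ≤ b` has measure `O(b₀^{-ε/4} min(1, b / ‖W‖))` (`volume_fMap_le`): the outer coordinates of
`W` are controlled because `q(s)` is at least a multiple of `b₀^{ε/4}`, and the middle coordinate
because the `s` with `|c·L(s)| ≤ b` form a slab of thickness `O(b / ‖c‖)` (`real_slab`).

Summing over `Z' ∈ F` in dyadic shells, the hypothesis on `F` and `δ ≤ 1` give, for fixed `Z` and
`b ≥ b₀`, that the integral over `s` of `μ_s(B(f_s(Z), b))` is at most `O(b₀^{-ε/4} N b ^ δ)`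
(`sum_le_of_card_le`), with `N = O(log (1/b₀))` the number of dyadic scales. Dividing by `b ^ δ` and
summing over dyadic `b` in `[b₀, 1]` gives an energy (`T Z s / F.card`) whose integral over `s` is
`O(b₀^{-ε/4} N²) = O(b₀^{-ε})`, because logarithms are absorbed by powers of `b₀` (`exists_scales`).
Markov's inequality in `s`, and then in `Z` for each good `s`, yields `B'` and `F_s`. On these,
the energy is `O(b₀^{-3ε})`, which controls all `b ≥ b₀` at once by rounding `b` up to a dyadic scale.
-/

open MeasureTheory Metric
open scoped Classical ENNReal

/-- The space `ℝⁿ = {(r₁, c, r₂) : r₁, r₂ ∈ ℝ, c ∈ ℝ^{n−2}}`. -/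
abbrev PaperSpace (n : ℕ) : Type := ℝ × EuclideanSpace ℝ (Fin (n - 2)) × ℝ

/-- The Euclidean norm on `ℝⁿ = ℝ × ℝ^{n−2} × ℝ`. -/
noncomputable def euclNorm {n : ℕ} (Z : PaperSpace n) : ℝ :=
  Real.sqrt (Z.1 ^ 2 + ‖Z.2.1‖ ^ 2 + Z.2.2 ^ 2)

/-- The map `f_s(r₁,c,r₂) = (r₁, c·L(s), r₂·q(s)) ∈ ℝ³` (Euclidean `ℝ³`). -/
noncomputable def fMap {n : ℕ}
    (L : EuclideanSpace ℝ (Fin (n - 2)) →ₗ[ℝ] EuclideanSpace ℝ (Fin (n - 2)))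
    (q : QuadraticForm ℝ (EuclideanSpace ℝ (Fin (n - 2))))
    (s : EuclideanSpace ℝ (Fin (n - 2))) (Z : PaperSpace n) : EuclideanSpace ℝ (Fin 3) :=
  (WithLp.equiv 2 (Fin 3 → ℝ)).symm ![Z.1, ∑ i, Z.2.1 i * (L s) i, Z.2.2 * q s]

/-! ### Measure of a slab and coercivity of `q` -/

/-- A slab `{|φ s| ≤ b}` in the unit ball has volume `O(b / r)`, where `r = φ u` for a vector `u`
of norm at most `a`. The translates of the slab by `k * (3 b / r) • u`, for the `⌊r / (3 b)⌋ + 1`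
admissible `k`, are pairwise disjoint and all lie in the ball of radius `1 + a`. -/
theorem real_slab {E : Type*} [NormedAddCommGroup E] [NormedSpace ℝ E] [FiniteDimensional ℝ E]
    [MeasureSpace E] [BorelSpace E] [(volume : Measure E).IsAddHaarMeasure]
    (φ : E →L[ℝ] ℝ) (u : E) {r a b : ℝ} (hr : 0 < r) (hb : 0 < b) (hu : ‖u‖ ≤ a) (hφ : φ u = r) :
    volume.real {s : E | ‖s‖ ≤ 1 ∧ |φ s| ≤ b} * r ≤ 3 * b * volume.real (closedBall (0 : E) (1 + a)) := by
  set S := {s : E | ‖s‖ ≤ 1 ∧ |φ s| ≤ b}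
  set t := 3 * b / r with ht
  have ht0 : 0 < t := by positivity
  have htr : t * r = 3 * b := by rw [ht]; field_simp
  set M := ⌊1 / t⌋₊ with hM
  have hMt : (M : ℝ) * t ≤ 1 := by
    have := Nat.floor_le (show 0 ≤ 1 / t by positivity)
    calc (M : ℝ) * t ≤ 1 / t * t := by gcongr
      _ = 1 := by field_simp
  have hM1 : 1 ≤ ((M : ℝ) + 1) * t := by
    have := (Nat.lt_floor_add_one (1 / t)).le
    calc (1 : ℝ) = 1 / t * t := by field_simp
      _ ≤ _ := by gcongr
  have hSm : MeasurableSet S := by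
    apply IsClosed.measurableSet
    exact (isClosed_le continuous_norm continuous_const).inter
      (isClosed_le (φ.continuous.abs) continuous_const)
  let T : ℕ → Set E := fun k => (fun x => x + (-((k : ℝ) * t)) • u) ⁻¹' S
  have hTm : ∀ k, volume.real (T k) = volume.real S := fun k => by
    simp only [T, Measure.real, measure_preimage_add_right]
  have hTφ : ∀ k, ∀ x ∈ T k, |φ x - k * (3 * b)| ≤ b := by
    intro k x hx
    have := hx.2
    simp only [map_add, map_smul, hφ, smul_eq_mul] at this
    convert this using 2
    rw [← htr]; ring
  have hdisj : (Set.univ : Set ℕ).PairwiseDisjoint T := by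
    intro i _ j _ hij
    refine Set.disjoint_left.2 fun x hi hj => hij ?_
    have h1 := abs_le.1 (hTφ i x hi)
    have h2 := abs_le.1 (hTφ j x hj)
    have h3 : ((i : ℝ) - j) * 3 ≤ 2 := by
      refine le_of_mul_le_mul_right ?_ hb; linarith
    have h4 : ((j : ℝ) - i) * 3 ≤ 2 := by
      refine le_of_mul_le_mul_right ?_ hb; linarith
    have h5 : (i : ℝ) < j + 1 := by linarith
    have h6 : (j : ℝ) < i + 1 := by linarith
    norm_cast at h5 h6
    omega
  have hsub : (⋃ k ∈ Finset.range (M + 1), T k) ⊆ closedBall (0 : E) (1 + a) := by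
    intro x hx
    simp only [Set.mem_iUnion, Finset.mem_range] at hx
    obtain ⟨k, hk, hx⟩ := hx
    have h1 : ‖x + (-((k : ℝ) * t)) • u‖ ≤ 1 := hx.1
    have hkM : (k : ℝ) ≤ M := by exact_mod_cast Nat.lt_succ_iff.1 hk
    have h2 : ‖((k : ℝ) * t) • u‖ ≤ a := by
      rw [norm_smul, Real.norm_of_nonneg (by positivity)]
      calc (k : ℝ) * t * ‖u‖ ≤ 1 * a := by
            gcongr
            exact le_trans (by gcongr) hMt
        _ = a := one_mul a
    rw [mem_closedBall_zero_iff]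
    calc ‖x‖ = ‖(x + (-((k : ℝ) * t)) • u) + ((k : ℝ) * t) • u‖ := by congr 1; module
      _ ≤ 1 + a := (norm_add_le _ _).trans (add_le_add h1 h2)
  have hsum : ((M : ℝ) + 1) * volume.real S ≤ volume.real (closedBall (0 : E) (1 + a)) := by
    have hfin : volume (closedBall (0 : E) (1 + a)) ≠ ⊤ := measure_closedBall_lt_top.ne
    refine le_trans (le_of_eq ?_) (measureReal_mono hsub hfin)
    rw [measureReal_biUnion_finset (hdisj.subset (Set.subset_univ _))
      (fun k _ => hSm.preimage (by fun_prop))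
      (fun k hk => measure_ne_top_of_subset (fun x hx => hsub (Set.mem_biUnion hk hx)) hfin)]
    simp [hTm]
  have hS0 : 0 ≤ volume.real S := measureReal_nonneg
  calc volume.real S * r ≤ volume.real S * r * (((M : ℝ) + 1) * t) :=
        le_mul_of_one_le_right (by positivity) hM1
    _ = (((M : ℝ) + 1) * volume.real S) * (t * r) := by ring
    _ ≤ volume.real (closedBall (0 : E) (1 + a)) * (t * r) := by gcongr
    _ = _ := by rw [htr]; ring

theorem continuous_quadForm {m : ℕ} (q : QuadraticForm ℝ (EuclideanSpace ℝ (Fin m))) : Continuous q := by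
  have h : ∀ s, q s = QuadraticMap.associated (R := ℝ) q s s := fun s =>
    (QuadraticMap.associated_eq_self_apply ℝ q s).symm
  have : (q : EuclideanSpace ℝ (Fin m) → ℝ) = fun s => QuadraticMap.associated (R := ℝ) q s s := funext h
  rw [this]
  have h1 : Continuous fun s => (QuadraticMap.associated (R := ℝ) q s).toContinuousLinearMap := by
    exact (LinearMap.toContinuousLinearMap.toLinearMap ∘ₗ
      QuadraticMap.associated (R := ℝ) q).continuous_of_finiteDimensional
  exact h1.clm_apply continuous_id

/-- A positive definite form is bounded below by a multiple of the squared norm: take its minimum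
on the unit sphere. -/
theorem quadForm_lower {m : ℕ} (q : QuadraticForm ℝ (EuclideanSpace ℝ (Fin m))) (hq : q.PosDef) :
    ∃ l > 0, ∀ s, l * ‖s‖ ^ 2 ≤ q s := by
  rcases (sphere (0 : EuclideanSpace ℝ (Fin m)) 1).eq_empty_or_nonempty with h | h
  · refine ⟨1, one_pos, fun s => ?_⟩
    have : s = 0 := by
      by_contra hs
      have : (‖s‖⁻¹ • s) ∈ sphere (0 : EuclideanSpace ℝ (Fin m)) 1 := by
        simp [norm_smul, hs]
      simp [h] at this
    simp [this]
  · obtain ⟨x, hx, hmin⟩ := (isCompact_sphere _ _).exists_isMinOn h (continuous_quadForm q).continuousOn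
    have hx1 : ‖x‖ = 1 := by simpa using hx
    have hx0 : x ≠ 0 := by rintro rfl; simp at hx1
    refine ⟨q x, hq x hx0, fun s => ?_⟩
    by_cases hs : s = 0
    · simp [hs]
    have hs' : 0 < ‖s‖ := norm_pos_iff.2 hs
    have h1 : q x ≤ q (‖s‖⁻¹ • s) := hmin (by simp [norm_smul, hs])
    rw [QuadraticMap.map_smul, smul_eq_mul] at h1
    calc q x * ‖s‖ ^ 2 ≤ (‖s‖⁻¹ * ‖s‖⁻¹ * q s) * ‖s‖ ^ 2 := by gcongr
      _ = q s := by field_simp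

/-! ### Transversality of the family `fMap` -/

theorem euclNorm_le_add {n : ℕ} (W : PaperSpace n) : euclNorm W ≤ |W.1| + ‖W.2.1‖ + |W.2.2| := by
  rw [euclNorm, Real.sqrt_le_left (by positivity)]
  nlinarith [abs_nonneg W.1, norm_nonneg W.2.1, abs_nonneg W.2.2, sq_abs W.1, sq_abs W.2.2,
    mul_nonneg (abs_nonneg W.1) (norm_nonneg W.2.1), mul_nonneg (abs_nonneg W.1) (abs_nonneg W.2.2),
    mul_nonneg (norm_nonneg W.2.1) (abs_nonneg W.2.2)]

theorem euclNorm_sub_le_two {n : ℕ} {Z Z' : PaperSpace n} (h : euclNorm Z ≤ 1)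
    (h' : euclNorm Z' ≤ 1) : euclNorm (Z' - Z) ≤ 2 := by
  rw [euclNorm, Real.sqrt_le_left (by norm_num)] at *
  have h1 : ‖Z'.2.1 - Z.2.1‖ ^ 2 ≤ (‖Z'.2.1‖ + ‖Z.2.1‖) ^ 2 := by
    gcongr; exact norm_sub_le _ _
  simp only [Prod.fst_sub, Prod.snd_sub]
  nlinarith [sq_nonneg (Z'.1 + Z.1), sq_nonneg (Z'.2.2 + Z.2.2),
    sq_nonneg (‖Z'.2.1‖ - ‖Z.2.1‖)]

theorem fMap_sub {n : ℕ}
    (L : EuclideanSpace ℝ (Fin (n - 2)) →ₗ[ℝ] EuclideanSpace ℝ (Fin (n - 2)))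
    (q : QuadraticForm ℝ (EuclideanSpace ℝ (Fin (n - 2))))
    (s : EuclideanSpace ℝ (Fin (n - 2))) (Z Z' : PaperSpace n) :
    fMap L q s Z' - fMap L q s Z = fMap L q s (Z' - Z) := by
  ext i
  fin_cases i <;> simp [fMap, sub_mul, Finset.sum_sub_distrib]

theorem abs_le_of_norm_fMap_le {n : ℕ}
    {L : EuclideanSpace ℝ (Fin (n - 2)) →ₗ[ℝ] EuclideanSpace ℝ (Fin (n - 2))}
    {q : QuadraticForm ℝ (EuclideanSpace ℝ (Fin (n - 2)))}
    {s : EuclideanSpace ℝ (Fin (n - 2))} {W : PaperSpace n} {b : ℝ} (h : ‖fMap L q s W‖ ≤ b) :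
    |W.1| ≤ b ∧ |inner ℝ W.2.1 (L s)| ≤ b ∧ |W.2.2 * q s| ≤ b := by
  refine ⟨?_, ?_, ?_⟩
  · simpa [fMap] using (PiLp.norm_apply_le (fMap L q s W) 0).trans h
  · simpa [fMap, PiLp.inner_apply, mul_comm] using (PiLp.norm_apply_le (fMap L q s W) 1).trans h
  · simpa [fMap] using (PiLp.norm_apply_le (fMap L q s W) 2).trans h

theorem continuous_fMap {n : ℕ}
    (L : EuclideanSpace ℝ (Fin (n - 2)) →ₗ[ℝ] EuclideanSpace ℝ (Fin (n - 2)))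
    (q : QuadraticForm ℝ (EuclideanSpace ℝ (Fin (n - 2)))) (Z : PaperSpace n) :
    Continuous fun s => fMap L q s Z := by
  have hL : Continuous L := L.continuous_of_finiteDimensional
  have hq := continuous_quadForm q
  refine (PiLp.continuous_toLp 2 _).comp (continuous_pi fun i => ?_)
  fin_cases i
  · exact continuous_const
  · simp only [Fin.mk_one, Matrix.cons_val_one, Matrix.cons_val_zero]
    fun_prop
  · exact continuous_const.mul hq

/-- Transversality: the set of `s` in the annulus `σ ≤ ‖s‖ ≤ 1` with `‖f_s(W)‖ ≤ b` has measure
`O(σ⁻² min(1, b / ‖W‖))`. If the set is nonempty, the first and third coordinates of `W` are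
`O(b)` and `O(σ⁻² b)`, since `q(s) ≥ l σ²`; the middle coordinate is controlled by the slab estimate. -/
theorem volume_fMap_le {n : ℕ}
    (L : EuclideanSpace ℝ (Fin (n - 2)) →ₗ[ℝ] EuclideanSpace ℝ (Fin (n - 2)))
    (hL : Function.Bijective L)
    (q : QuadraticForm ℝ (EuclideanSpace ℝ (Fin (n - 2)))) (hq : q.PosDef) :
    ∃ A ≥ (1 : ℝ), ∀ σ : ℝ, 0 < σ → σ ≤ 1 → ∀ W : PaperSpace n, ∀ b > 0,
      volume.real ({s | ‖fMap L q s W‖ ≤ b} ∩ {s | σ ≤ ‖s‖ ∧ ‖s‖ ≤ 1}) ≤ A * (σ ^ 2)⁻¹ ∧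
      volume.real ({s | ‖fMap L q s W‖ ≤ b} ∩ {s | σ ≤ ‖s‖ ∧ ‖s‖ ≤ 1}) * euclNorm W
        ≤ A * (σ ^ 2)⁻¹ * b := by
  obtain ⟨l, hl, hlq⟩ := quadForm_lower q hq
  let Le := (LinearEquiv.ofBijective L hL).toContinuousLinearEquiv
  have hLe : ∀ x, L (Le.symm x) = x := fun x => Le.apply_symm_apply x
  set a := ‖(Le.symm : EuclideanSpace ℝ (Fin (n - 2)) →L[ℝ] EuclideanSpace ℝ (Fin (n - 2)))‖ with ha
  set V := volume.real (closedBall (0 : EuclideanSpace ℝ (Fin (n - 2))) 1) with hV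
  set V' := volume.real (closedBall (0 : EuclideanSpace ℝ (Fin (n - 2))) (1 + a)) with hV'
  have hV0 : 0 ≤ V := measureReal_nonneg
  have hV0' : 0 ≤ V' := measureReal_nonneg
  have hVl : 0 ≤ V * l⁻¹ := by positivity
  refine ⟨1 + V + 3 * V' + V * l⁻¹, by linarith, fun σ hσ hσ1 W b hb => ?_⟩
  set K := (σ ^ 2)⁻¹ with hK
  have hK1 : 1 ≤ K := (one_le_inv₀ (by positivity)).2 (pow_le_one₀ hσ.le hσ1)
  set S := {s | ‖fMap L q s W‖ ≤ b} ∩ {s | σ ≤ ‖s‖ ∧ ‖s‖ ≤ 1} with hS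
  set v := volume.real S with hv
  have hv0 : 0 ≤ v := measureReal_nonneg
  have hvV : v ≤ V := by
    refine measureReal_mono (fun s hs => ?_) measure_closedBall_lt_top.ne
    simpa using hs.2.2
  have h1 : v * |W.1| ≤ V * b := by
    rcases S.eq_empty_or_nonempty with h | ⟨s, hs⟩
    · rw [hv, h]; simp; positivity
    · gcongr
      exact (abs_le_of_norm_fMap_le hs.1).1
  have h3 : v * |W.2.2| ≤ V * (l⁻¹ * K * b) := by
    rcases S.eq_empty_or_nonempty with h | ⟨s, hs⟩
    · rw [hv, h]; simp; positivity
    · gcongr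
      have h := (abs_le_of_norm_fMap_le hs.1).2.2
      have hqs : l * σ ^ 2 ≤ q s := le_trans (by gcongr; exact hs.2.1) (hlq s)
      have hp : 0 < l * σ ^ 2 := by positivity
      rw [abs_mul, abs_of_nonneg (hp.le.trans hqs)] at h
      have h' : |W.2.2| * (l * σ ^ 2) ≤ b := le_trans (by gcongr) h
      rw [hK, ← mul_inv, inv_mul_eq_div, le_div_iff₀ hp]
      exact h'
  have h2 : v * ‖W.2.1‖ ≤ 3 * V' * b := by
    by_cases hW : W.2.1 = 0
    · rw [hW]; simp; positivity
    have hW' : 0 < ‖W.2.1‖ := norm_pos_iff.2 hW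
    have := real_slab ((innerSL ℝ W.2.1).comp L.toContinuousLinearMap)
      (Le.symm (‖W.2.1‖⁻¹ • W.2.1)) (r := ‖W.2.1‖) (a := a) hW' hb ?_ ?_
    · refine le_trans ?_ (this.trans_eq (by ring))
      refine mul_le_mul_of_nonneg_right (measureReal_mono (fun s hs =>
        ⟨hs.2.2, (abs_le_of_norm_fMap_le hs.1).2.1⟩) ?_) hW'.le
      exact ((measure_mono fun s hs => by simpa using hs.1).trans_lt
        (measure_closedBall_lt_top (x := 0) (r := 1))).ne
    · refine ((Le.symm : EuclideanSpace ℝ (Fin (n - 2)) →L[ℝ]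
        EuclideanSpace ℝ (Fin (n - 2))).le_opNorm _).trans_eq ?_
      rw [norm_smul, norm_inv, norm_norm, inv_mul_cancel₀ hW'.ne', mul_one]
    -- The vector `u = L⁻¹(c / ‖c‖)` with `c = W.2.1` satisfies `⟪c, L u⟫ = ‖c‖`.
    · simp only [ContinuousLinearMap.comp_apply, LinearMap.coe_toContinuousLinearMap', hLe,
        innerSL_apply_apply, inner_smul_right, real_inner_self_eq_norm_sq]
      field_simp
  have hbK : b ≤ K * b := le_mul_of_one_le_left hb.le hK1
  constructor
  · calc v ≤ (1 + V + 3 * V' + V * l⁻¹) * 1 := by linarith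
      _ ≤ _ := by gcongr
  · calc v * euclNorm W ≤ v * (|W.1| + ‖W.2.1‖ + |W.2.2|) := by gcongr; exact euclNorm_le_add W
      _ = v * |W.1| + v * ‖W.2.1‖ + v * |W.2.2| := by ring
      _ ≤ V * b + 3 * V' * b + V * (l⁻¹ * K * b) := by gcongr
      _ ≤ V * (K * b) + 3 * V' * (K * b) + V * (l⁻¹ * K * b) := by gcongr
      _ ≤ (1 + V + 3 * V' + V * l⁻¹) * K * b := by nlinarith

/-! ### Dyadic summation -/

/-- If `v ≤ A min(1, b / d)`, then `v` is at most a weighted sum of the indicators of `d ≤ 2 ^ j * b`: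
the term of the least such `j` already suffices. -/
theorem le_sum_dyadic {v d A b : ℝ} (hA : 0 ≤ A) (hb : 0 < b) (h1 : v ≤ A) (h2 : v * d ≤ A * b)
    {N : ℕ} (hN : d ≤ 2 ^ N * b) :
    v ≤ 2 * A * ∑ j ∈ Finset.range (N + 1), (2 ^ j)⁻¹ * if d ≤ 2 ^ j * b then (1 : ℝ) else 0 := by
  have hex : ∃ j, d ≤ 2 ^ j * b := ⟨N, hN⟩
  have hjN : Nat.find hex ≤ N := Nat.find_min' hex hN
  have hj := Nat.find_spec hex
  have hmin : ∀ i < Nat.find hex, ¬ d ≤ 2 ^ i * b := fun i hi => Nat.find_min hex hi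
  generalize Nat.find hex = j at *
  have key : v ≤ 2 * A * (2 ^ j)⁻¹ := by
    rcases j with _ | i
    · simp; linarith
    · have hi := not_le.1 (hmin i (Nat.lt_succ_self i))
      have h3 : v * 2 ^ i ≤ A := by
        rcases le_total v 0 with hv | hv
        · exact (mul_nonpos_of_nonpos_of_nonneg hv (by positivity)).trans hA
        · refine le_of_mul_le_mul_right ?_ hb
          calc v * 2 ^ i * b = v * (2 ^ i * b) := by ring
            _ ≤ v * d := by gcongr
            _ ≤ _ := h2
      rw [← div_eq_mul_inv, le_div_iff₀ (by positivity), pow_succ]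
      linarith
  refine key.trans ?_
  gcongr
  refine le_trans (le_of_eq ?_) (Finset.single_le_sum (f := fun j => (2 ^ j)⁻¹ * if d ≤ 2 ^ j * b then (1 : ℝ) else 0)
    (fun i _ => by positivity) (Finset.mem_range.2 (Nat.lt_succ_of_le hjN)))
  simp [hj]

/-- If the `d i` obey a `δ`-dimensional counting bound at scales `≥ b` and `v i ≤ A min(1, b / d i)`,
then the `v i` sum to `O(N b ^ δ)` times the cardinality. Since `δ ≤ 1`, each dyadic shell contributes at
most `O(b ^ δ)`, so the constant does not depend on `δ`. -/
theorem sum_le_of_card_le {ι : Type*} (F : Finset ι) (v d : ι → ℝ) {A C b δ : ℝ} (hA : 0 ≤ A) (hC : 0 ≤ C)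
    (hb : 0 < b) (hδ1 : δ ≤ 1) {N : ℕ} (h1 : ∀ i ∈ F, v i ≤ A) (h2 : ∀ i ∈ F, v i * d i ≤ A * b)
    (hN : ∀ i ∈ F, d i ≤ 2 ^ N * b)
    (hF : ∀ r ≥ b, ((F.filter fun i => d i ≤ r).card : ℝ) ≤ C * r ^ δ * F.card) :
    ∑ i ∈ F, v i ≤ 2 * A * C * (N + 1) * b ^ δ * F.card := by
  calc ∑ i ∈ F, v i
      ≤ ∑ i ∈ F, 2 * A * ∑ j ∈ Finset.range (N + 1), (2 ^ j)⁻¹ * if d i ≤ 2 ^ j * b then (1 : ℝ) else 0 :=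
        Finset.sum_le_sum fun i hi => le_sum_dyadic hA hb (h1 i hi) (h2 i hi) (hN i hi)
    _ = 2 * A * ∑ j ∈ Finset.range (N + 1), (2 ^ j)⁻¹ * ((F.filter fun i => d i ≤ 2 ^ j * b).card : ℝ) := by
        rw [← Finset.mul_sum, Finset.sum_comm]
        simp_rw [← Finset.mul_sum, Finset.sum_boole]
    _ ≤ 2 * A * ∑ j ∈ Finset.range (N + 1), C * b ^ δ * F.card := by
        refine mul_le_mul_of_nonneg_left (Finset.sum_le_sum fun j _ => ?_) (by positivity)
        have hp : (1 : ℝ) ≤ 2 ^ j := one_le_pow₀ (by norm_num)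
        have h3 : (2 ^ j * b) ^ δ ≤ 2 ^ j * b ^ δ := by
          rw [Real.mul_rpow (by positivity) hb.le]
          gcongr
          exact Real.rpow_le_self_of_one_le hp hδ1
        calc ((2 : ℝ) ^ j)⁻¹ * ((F.filter fun i => d i ≤ 2 ^ j * b).card : ℝ)
            ≤ (2 ^ j)⁻¹ * (C * (2 ^ j * b) ^ δ * F.card) := by
              gcongr; exact hF _ (le_mul_of_one_le_left hb.le hp)
          _ ≤ (2 ^ j)⁻¹ * (C * (2 ^ j * b ^ δ) * F.card) := by gcongr
          _ = _ := by field_simp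
    _ = _ := by simp; ring

/-- About `log₂ (1 / b₀)` dyadic scales cover `[b₀, 1]`, and the square of their number is
absorbed by a small negative power of `b₀`. -/
theorem exists_scales {ε : ℝ} (hε : 0 < ε) : ∃ c ≥ (1 : ℝ), ∀ b₀ : ℝ, 0 < b₀ → b₀ ≤ 1 →
    ∃ N : ℕ, 1 ≤ 2 ^ N * b₀ ∧ ((N : ℝ) + 2) ^ 2 ≤ c * b₀ ^ (-(3 * ε / 4)) := by
  set η := 3 * ε / 8 with hη
  have hη0 : 0 < η := by positivity
  have hl2 : 0 < Real.log 2 := Real.log_pos (by norm_num)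
  have hc0 : 0 < 1 / (η * Real.log 2) := by positivity
  set c := 1 / (η * Real.log 2) + 3 with hc
  refine ⟨c ^ 2, one_le_pow₀ (by linarith), fun b₀ hb hb1 => ?_⟩
  have hx : 1 ≤ b₀⁻¹ := (one_le_inv₀ hb).2 hb1
  refine ⟨⌈Real.logb 2 b₀⁻¹⌉₊, ?_, ?_⟩
  · have h := Nat.le_ceil (Real.logb 2 b₀⁻¹)
    rw [Real.logb_le_iff_le_rpow (by norm_num) (by positivity), Real.rpow_natCast] at h
    calc (1 : ℝ) = b₀⁻¹ * b₀ := by field_simp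
      _ ≤ _ := by gcongr
  · have h := (Nat.ceil_lt_add_one (Real.logb_nonneg (b := 2) (by norm_num) hx)).le
    have h2 : Real.logb 2 b₀⁻¹ ≤ 1 / (η * Real.log 2) * b₀⁻¹ ^ η := by
      have := Real.log_le_rpow_div (x := b₀⁻¹) (by positivity) hη0
      calc Real.logb 2 b₀⁻¹ = Real.log b₀⁻¹ / Real.log 2 := rfl
        _ ≤ (b₀⁻¹ ^ η / η) / Real.log 2 := by gcongr
        _ = _ := by field_simp
    have h3 : 1 ≤ b₀⁻¹ ^ η := Real.one_le_rpow hx hη0.le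
    have h4 : (⌈Real.logb 2 b₀⁻¹⌉₊ : ℝ) + 2 ≤ c * b₀⁻¹ ^ η := by rw [hc, add_mul]; linarith
    calc ((⌈Real.logb 2 b₀⁻¹⌉₊ : ℝ) + 2) ^ 2 ≤ (c * b₀⁻¹ ^ η) ^ 2 := by gcongr
      _ = c ^ 2 * b₀ ^ (-(3 * ε / 4)) := by
        rw [mul_pow, ← Real.rpow_natCast (b₀⁻¹ ^ η), ← Real.rpow_mul (by positivity),
          Real.inv_rpow hb.le, ← Real.rpow_neg hb.le]
        congr 2; rw [hη]; push_cast; ring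

theorem exists_dyadic_scale {b₀ b : ℝ} (hb₀ : 0 < b₀) (hb : b₀ ≤ b) {N : ℕ}
    (hN : b ≤ 2 ^ N * b₀) : ∃ k ≤ N, b ≤ 2 ^ k * b₀ ∧ 2 ^ k * b₀ ≤ 2 * b := by
  have hex : ∃ k, b ≤ 2 ^ k * b₀ := ⟨N, hN⟩
  refine ⟨Nat.find hex, Nat.find_min' hex hN, Nat.find_spec hex, ?_⟩
  have hmin : ∀ i < Nat.find hex, ¬ b ≤ 2 ^ i * b₀ := fun i hi => Nat.find_min hex hi
  generalize Nat.find hex = k at *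
  rcases k with _ | i
  · simp; linarith
  · have := hmin i (Nat.lt_succ_self i)
    rw [pow_succ]; linarith

/-! ### The first-moment argument -/

/-- for most `s`, the projected measure `μ_s = f_sμ` has dimension `δ`
at scales `≥ b₀`, where `μ` is the uniform probability measure on `F`. -/
theorem stmt7 (n : ℕ) (hn : 3 ≤ n)
    (L : EuclideanSpace ℝ (Fin (n - 2)) →ₗ[ℝ] EuclideanSpace ℝ (Fin (n - 2)))
    (hL : Function.Bijective L)
    (q : QuadraticForm ℝ (EuclideanSpace ℝ (Fin (n - 2)))) (hq : q.PosDef)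
    (C ε : ℝ) (hC : 1 ≤ C) (hε : 0 < ε) :
    ∃ C'' > (0 : ℝ),
      ∀ (δ b₀ : ℝ), 0 < δ → δ ≤ 1 → 0 < b₀ → b₀ ≤ 1 → ε < δ / 100 →
      ∀ F : Finset (PaperSpace n), F.Nonempty →
        (∀ Z ∈ F, euclNorm Z ≤ 1) →
        (∀ Z ∈ F, ∀ b ≥ b₀,
          ((F.filter (fun Z' => euclNorm (Z' - Z) ≤ b)).card : ℝ) ≤ C * b ^ δ * F.card) →
        ∃ B' ⊆ {s : EuclideanSpace ℝ (Fin (n - 2)) | b₀ ^ (ε / 8) ≤ ‖s‖ ∧ ‖s‖ ≤ 1},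
          MeasurableSet B' ∧
          volume ({s : EuclideanSpace ℝ (Fin (n - 2)) | b₀ ^ (ε / 8) ≤ ‖s‖ ∧ ‖s‖ ≤ 1} \ B')
            ≤ ENNReal.ofReal (b₀ ^ ε) ∧
          ∀ s ∈ B',
            ∃ Fs ⊆ F,
              -- `μ(F \ F_s) ≤ b₀^ε`
              (((F \ Fs).card : ℝ) ≤ b₀ ^ ε * F.card) ∧
              ∀ Z ∈ Fs, ∀ b ≥ b₀,
                -- `μ_s(B(f_s(Z), b)) ≤ C''·b₀^{−3ε}·b^δ`
                ((F.filter (fun Z' => ‖fMap L q s Z' - fMap L q s Z‖ ≤ b)).card : ℝ)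
                  ≤ C'' * b₀ ^ (-(3 * ε)) * b ^ δ * F.card := by
  obtain ⟨A, hA, hvol⟩ := volume_fMap_le L hL q hq
  obtain ⟨c, hc, hscale⟩ := exists_scales hε
  have hD : 1 ≤ 2 * A * C * c := by
    have h1 : 1 ≤ A * C := one_le_mul_of_one_le_of_one_le hA hC
    have h2 : 1 ≤ A * C * c := one_le_mul_of_one_le_of_one_le h1 hc
    linarith
  set D := 2 * A * C * c with hDdef
  refine ⟨2 * D, by linarith, fun δ b₀ hδ hδ1 hb₀ hb₀1 _ F hF hF1 hFδ => ?_⟩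
  obtain ⟨N, hN, hNc⟩ := hscale b₀ hb₀ hb₀1
  set B := {s : EuclideanSpace ℝ (Fin (n - 2)) | b₀ ^ (ε / 8) ≤ ‖s‖ ∧ ‖s‖ ≤ 1} with hB
  have hBm : MeasurableSet B :=
    ((isClosed_le continuous_const continuous_norm).inter
      (isClosed_le continuous_norm continuous_const)).measurableSet
  have hBfin : volume B ≠ ⊤ :=
    ((measure_mono fun s hs => by simpa using hs.2).trans_lt
      (measure_closedBall_lt_top (x := 0) (r := 1))).ne
  have hFc : (0 : ℝ) < F.card := by exact_mod_cast hF.card_pos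
  let P : ℕ → PaperSpace n → PaperSpace n → Set (EuclideanSpace ℝ (Fin (n - 2))) :=
    fun k Z Z' => {s | ‖fMap L q s Z' - fMap L q s Z‖ ≤ 2 ^ k * b₀}
  have hPm : ∀ k Z Z', MeasurableSet (P k Z Z') := fun k Z Z' =>
    (isClosed_le ((continuous_fMap L q Z').sub (continuous_fMap L q Z)).norm
      continuous_const).measurableSet
  -- `T Z s` is the discrete energy: the sum over the dyadic scales `b_k` of `b_k ^ (-δ)` times the
  -- number of `Z'` with `‖f_s Z' - f_s Z‖ ≤ b_k`.
  let T : PaperSpace n → EuclideanSpace ℝ (Fin (n - 2)) → ℝ := fun Z s =>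
    ∑ k ∈ Finset.range (N + 1), ((2 ^ k * b₀) ^ δ)⁻¹ *
      ∑ Z' ∈ F, (P k Z Z').indicator (1 : EuclideanSpace ℝ (Fin (n - 2)) → ℝ) s
  have hind : ∀ k Z Z' s,
      0 ≤ (P k Z Z').indicator (1 : EuclideanSpace ℝ (Fin (n - 2)) → ℝ) s := fun k Z Z' s =>
    Set.indicator_nonneg (fun _ _ => zero_le_one) s
  have hTerm : ∀ k Z s, 0 ≤ ((2 ^ k * b₀) ^ δ)⁻¹ *
      ∑ Z' ∈ F, (P k Z Z').indicator (1 : EuclideanSpace ℝ (Fin (n - 2)) → ℝ) s :=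
    fun k Z s => mul_nonneg (by positivity) (Finset.sum_nonneg fun Z' _ => hind k Z Z' s)
  have hT0 : ∀ Z s, 0 ≤ T Z s := fun Z s => Finset.sum_nonneg fun k _ => hTerm k Z s
  have hintP : ∀ k Z Z', Integrable
      ((P k Z Z').indicator (1 : EuclideanSpace ℝ (Fin (n - 2)) → ℝ)) (volume.restrict B) := by
    intro k Z Z'
    have : IsFiniteMeasure (volume.restrict B) := ⟨by simpa using hBfin.lt_top⟩
    exact (integrable_const (1 : ℝ)).indicator (hPm k Z Z')
  have hintT : ∀ Z, Integrable (T Z) (volume.restrict B) := fun Z =>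
    integrable_finsetSum _ fun k _ => (integrable_finsetSum _ fun Z' _ => hintP k Z Z').const_mul _
  have hTm : ∀ Z, Measurable (T Z) := fun Z =>
    Finset.measurable_fun_sum _ fun k _ => (Finset.measurable_fun_sum _ fun Z' _ =>
      measurable_one.indicator (hPm k Z Z')).const_mul _
  set σ := b₀ ^ (ε / 8) with hσdef
  have hσ : 0 < σ := by positivity
  have hσ1 : σ ≤ 1 := Real.rpow_le_one hb₀.le hb₀1 (by positivity)
  have hσ2 : (σ ^ 2)⁻¹ = b₀ ^ (-(ε / 4)) := by
    rw [hσdef, ← Real.rpow_natCast, ← Real.rpow_mul hb₀.le, ← Real.rpow_neg hb₀.le]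
    congr 1; push_cast; ring
  have hTint : ∀ Z ∈ F, ∫ s in B, T Z s ≤ D * b₀ ^ (-ε) * F.card := by
    intro Z hZ
    have h1 : ∫ s in B, T Z s = ∑ k ∈ Finset.range (N + 1), ((2 ^ k * b₀) ^ δ)⁻¹ *
        ∑ Z' ∈ F, volume.real (P k Z Z' ∩ B) := by
      rw [integral_finsetSum _ fun k _ =>
        (integrable_finsetSum _ fun Z' _ => hintP k Z Z').const_mul _]
      refine Finset.sum_congr rfl fun k _ => ?_
      rw [integral_const_mul, integral_finsetSum _ fun Z' _ => hintP k Z Z']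
      congr 1
      refine Finset.sum_congr rfl fun Z' _ => ?_
      rw [integral_indicator_one (hPm k Z Z'), measureReal_restrict_apply (hPm k Z Z')]
    have h2 : ∀ k ∈ Finset.range (N + 1), ((2 ^ k * b₀) ^ δ)⁻¹ *
        ∑ Z' ∈ F, volume.real (P k Z Z' ∩ B) ≤
          2 * (A * (σ ^ 2)⁻¹) * C * ((N + 1 : ℕ) + 1) * F.card := by
      intro k _
      have hp : (1 : ℝ) ≤ 2 ^ k := one_le_pow₀ (by norm_num)
      have hbk : b₀ ≤ 2 ^ k * b₀ := le_mul_of_one_le_left hb₀.le hp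
      have hbk0 : 0 < 2 ^ k * b₀ := by positivity
      have hP : ∀ Z', P k Z Z' = {s | ‖fMap L q s (Z' - Z)‖ ≤ 2 ^ k * b₀} := fun Z' => by
        simp only [P, fMap_sub]
      have h3 := sum_le_of_card_le F (fun Z' => volume.real (P k Z Z' ∩ B))
        (fun Z' => euclNorm (Z' - Z)) (A := A * (σ ^ 2)⁻¹) (C := C) (b := 2 ^ k * b₀) (δ := δ)
        (by positivity) (by linarith) hbk0 hδ1 (N := N + 1)
        (fun Z' _ => by simp only [hP]; exact (hvol σ hσ hσ1 (Z' - Z) _ hbk0).1)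
        (fun Z' _ => by simp only [hP]; exact (hvol σ hσ hσ1 (Z' - Z) _ hbk0).2)
        (fun Z' hZ' => (euclNorm_sub_le_two (hF1 Z hZ) (hF1 Z' hZ')).trans (by
          rw [pow_succ]
          have : 2 ^ N * b₀ ≤ 2 ^ N * (2 ^ k * b₀) := by gcongr
          linarith))
        (fun r hr => hFδ Z hZ r (hbk.trans hr))
      rw [inv_mul_le_iff₀ (by positivity)]
      exact h3.trans_eq (by ring)
    rw [h1]
    refine (Finset.sum_le_sum h2).trans ?_
    rw [Finset.sum_const, Finset.card_range, nsmul_eq_mul]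
    have hN1 : ((N + 1 : ℕ) : ℝ) ≤ N + 2 := by push_cast; linarith
    calc ((N + 1 : ℕ) : ℝ) * (2 * (A * (σ ^ 2)⁻¹) * C * ((N + 1 : ℕ) + 1) * F.card)
        ≤ (N + 2) * (2 * (A * (σ ^ 2)⁻¹) * C * (N + 2) * F.card) := by
          rw [show ((N + 1 : ℕ) : ℝ) + 1 = N + 2 by push_cast; ring]
          gcongr
      _ = 2 * A * C * (σ ^ 2)⁻¹ * ((N + 2 : ℝ) ^ 2) * F.card := by ring
      _ ≤ 2 * A * C * (σ ^ 2)⁻¹ * (c * b₀ ^ (-(3 * ε / 4))) * F.card := by gcongr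
      _ = D * (b₀ ^ (-(ε / 4)) * b₀ ^ (-(3 * ε / 4))) * F.card := by rw [hσ2]; ring
      _ = _ := by rw [← Real.rpow_add hb₀]; congr 3; ring
  let G : EuclideanSpace ℝ (Fin (n - 2)) → ℝ := fun s => ∑ Z ∈ F, T Z s
  have hGm : Measurable G := Finset.measurable_fun_sum _ fun Z _ => hTm Z
  have hGint : Integrable G (volume.restrict B) := integrable_finsetSum _ fun Z _ => hintT Z
  have hG : ∫ s in B, G s ≤ D * b₀ ^ (-ε) * F.card ^ 2 := by
    rw [integral_finsetSum _ fun Z _ => hintT Z]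
    refine (Finset.sum_le_sum hTint).trans_eq ?_
    rw [Finset.sum_const, nsmul_eq_mul]; ring
  -- The loss `D b₀^{-ε}` in `hG` and the two Markov inequalities, each costing `b₀^ε`, dictate the
  -- threshold `D b₀^{-3ε}`.
  set τ := D * b₀ ^ (-(3 * ε)) with hτ
  have hτ0 : 0 < τ := by positivity
  -- Parameters with `G s ≥ θ` are discarded; for the others, Markov's inequality on `F` applies.
  set θ := τ * b₀ ^ ε * F.card ^ 2 with hθ
  have hθ0 : 0 < θ := by positivity
  have hmeas : MeasurableSet {s | θ ≤ G s} := measurableSet_le measurable_const hGm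
  refine ⟨B \ {s | θ ≤ G s}, Set.sdiff_subset, hBm.diff hmeas, ?_, fun s hs => ?_⟩
  · have hmk := mul_meas_ge_le_integral_of_nonneg
      (ae_of_all _ fun s => Finset.sum_nonneg fun Z _ => hT0 Z s) hGint θ
    rw [measureReal_restrict_apply hmeas] at hmk
    have hexp : D * b₀ ^ (-ε) * (F.card : ℝ) ^ 2 = θ * b₀ ^ ε := by
      rw [hθ, hτ]
      have : b₀ ^ (-ε) = b₀ ^ (-(3 * ε)) * b₀ ^ ε * b₀ ^ ε := by
        rw [← Real.rpow_add hb₀, ← Real.rpow_add hb₀]; congr 1; ring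
      rw [this]; ring
    have hle := le_of_mul_le_mul_left ((hmk.trans hG).trans_eq hexp) hθ0
    have hset : B \ (B \ {s | θ ≤ G s}) = {s | θ ≤ G s} ∩ B := by
      rw [Set.sdiff_sdiff_right_self, Set.inter_comm]
    rw [hset, ← ofReal_measureReal (measure_ne_top_of_subset Set.inter_subset_right hBfin)]
    exact ENNReal.ofReal_le_ofReal hle
  · have hsG : G s < θ := not_le.1 hs.2
    refine ⟨F.filter fun Z => T Z s ≤ τ * F.card, Finset.filter_subset _ _, ?_, ?_⟩
    · have h1 : ((F \ F.filter fun Z => T Z s ≤ τ * F.card).card : ℝ) * (τ * F.card) ≤ G s := by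
        rw [← nsmul_eq_mul]
        refine (Finset.card_nsmul_le_sum _ (fun Z => T Z s) _ fun Z hZ => ?_).trans
          (Finset.sum_le_sum_of_subset_of_nonneg Finset.sdiff_subset fun Z _ _ => hT0 Z s)
        simp only [Finset.mem_sdiff, Finset.mem_filter, not_and, not_le] at hZ
        exact (hZ.2 hZ.1).le
      have h2 : θ = b₀ ^ ε * F.card * (τ * F.card) := by rw [hθ]; ring
      exact le_of_mul_le_mul_right (h1.trans (hsG.le.trans_eq h2)) (by positivity)
    · intro Z hZ b hb
      have hTZ := (Finset.mem_filter.1 hZ).2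
      have hb0 : 0 < b := hb₀.trans_le hb
      have hτ2 : 2 * D * b₀ ^ (-(3 * ε)) = 2 * τ := by rw [hτ]; ring
      rw [hτ2]
      -- For `b ≥ 1` the bound is trivial; otherwise `b` is rounded up to a dyadic scale at most `2 b`.
      rcases le_total 1 b with h1b | hb1
      · have h3 : 1 ≤ b₀ ^ (-(3 * ε)) :=
          Real.one_le_rpow_of_pos_of_le_one_of_nonpos hb₀ hb₀1 (by linarith)
        have h4 : 1 ≤ τ := one_le_mul_of_one_le_of_one_le hD h3
        have h5 : 1 ≤ b ^ δ := Real.one_le_rpow h1b hδ.le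
        have h6 : 1 ≤ 2 * τ * b ^ δ := one_le_mul_of_one_le_of_one_le (by linarith) h5
        calc ((F.filter _).card : ℝ) ≤ F.card := by exact_mod_cast Finset.card_filter_le _ _
          _ ≤ _ := le_mul_of_one_le_left hFc.le h6
      · obtain ⟨k, hkN, hk, hk2⟩ := exists_dyadic_scale hb₀ hb (hb1.trans hN)
        have hbk0 : 0 < 2 ^ k * b₀ := by positivity
        have hcount : ((F.filter fun Z' => ‖fMap L q s Z' - fMap L q s Z‖ ≤ b).card : ℝ) ≤
            ∑ Z' ∈ F, (P k Z Z').indicator (1 : EuclideanSpace ℝ (Fin (n - 2)) → ℝ) s := by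
          rw [← Finset.sum_boole]
          refine Finset.sum_le_sum fun Z' _ => ?_
          split_ifs with h
          · have : s ∈ P k Z Z' := h.trans hk
            simp [this]
          · exact hind k Z Z' s
        have hone : ((2 ^ k * b₀) ^ δ)⁻¹ *
            ∑ Z' ∈ F, (P k Z Z').indicator (1 : EuclideanSpace ℝ (Fin (n - 2)) → ℝ) s
              ≤ τ * F.card :=
          (Finset.single_le_sum (fun k _ => hTerm k Z s)
            (Finset.mem_range.2 (Nat.lt_succ_of_le hkN))).trans hTZ
        rw [inv_mul_le_iff₀ (by positivity)] at hone
        have hpow : (2 ^ k * b₀) ^ δ ≤ 2 * b ^ δ := by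
          calc (2 ^ k * b₀) ^ δ ≤ (2 * b) ^ δ := Real.rpow_le_rpow hbk0.le hk2 hδ.le
            _ = 2 ^ δ * b ^ δ := Real.mul_rpow (by norm_num) hb0.le
            _ ≤ 2 * b ^ δ := by
              gcongr
              exact Real.rpow_le_self_of_one_le (by norm_num) hδ1
        calc _ ≤ (2 ^ k * b₀) ^ δ * (τ * F.card) := hcount.trans hone
          _ ≤ 2 * b ^ δ * (τ * F.card) := by gcongr
          _ = _ := by ring
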